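/- arXiv:1703.04243 — 2 statements merged into one kernel-verified Lean document; each statement's English description precedes it below -/
import Mathlib

section
/- Let α, β > −1 and n ≥ 0 be an integer. For ρ ≥ 1 and any complex number u with |u| = ρ, writing z = (u + u⁻¹)/2 (so that z lies on the Bernstein ellipse E_ρ), the Jacobi polynomial satisfies P_n^{(α,β)}(z) = Σ_{k=−n}^{n} d_{|k|,n} u^k, where d_{k,n} are the Chebyshev-connection coefficients defined in terms of a terminating ₃F₂ sum. -/
open Finset

/-- Pochhammer symbol `(a)_j = a (a+1) ⋯ (a+j-1)`. -/
noncomputable def poch (a : ℝ) (j : ℕ) : ℝ := ∏ i ∈ Finset.range j, (a + i)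

/-- Generalized binomial coefficient `binom(a, m) = a (a-1) ⋯ (a-m+1) / m!`. -/
noncomputable def gbinom (a : ℝ) (m : ℕ) : ℝ :=
  (∏ i ∈ Finset.range m, (a - i)) / (Nat.factorial m)

/-- Jacobi polynomial `P_n^{(α,β)}(x)` of a real variable. -/
noncomputable def jacobiP (α β : ℝ) (n : ℕ) (x : ℝ) : ℝ :=
  (1 / 2 ^ n) * ∑ k ∈ Finset.range (n + 1),
    gbinom ((n : ℝ) + α) (n - k) * gbinom ((n : ℝ) + β) k * (x - 1) ^ k * (x + 1) ^ (n - k)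

/-- Jacobi polynomial `P_n^{(α,β)}(z)` of a complex variable. -/
noncomputable def jacobiC (α β : ℝ) (n : ℕ) (z : ℂ) : ℂ :=
  (1 / 2 ^ n) * ∑ k ∈ Finset.range (n + 1),
    ((gbinom ((n : ℝ) + α) (n - k) * gbinom ((n : ℝ) + β) k : ℝ) : ℂ) *
      (z - 1) ^ k * (z + 1) ^ (n - k)

/-- Chebyshev-connection coefficients `d_{k,n}`, given by a terminating ₃F₂ sum. -/
noncomputable def dCoeff (α β : ℝ) (n k : ℕ) : ℝ :=
  (poch ((n : ℝ) + α + β + 1) k * poch ((k : ℝ) + α + 1) (n - k)) /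
      ((Nat.factorial (n - k)) * 2 ^ (2 * k) * (Nat.factorial k)) *
    ∑ j ∈ Finset.range (n - k + 1),
      (poch ((k : ℝ) - n) j * poch ((n : ℝ) + k + α + β + 1) j * poch ((k : ℝ) + 1 / 2) j) /
        (poch ((k : ℝ) + α + 1) j * poch (2 * (k : ℝ) + 1) j * (Nat.factorial j))

/-- The Bernstein ellipse `E_ρ`: the set of points `z = (u + u⁻¹)/2` with `|u| = ρ`. -/
def bernsteinEllipse (ρ : ℝ) : Set ℂ :=
  {z : ℂ | ∃ u : ℂ, ‖u‖ = ρ ∧ z = (u + u⁻¹) / 2}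

/-!
Expanding the powers of `z + 1 = (z - 1) + 2` and summing by Vandermonde gives the Taylor expansion
`P_n^{(α,β)}(z) = ∑ m ≤ n, binom(n+α+β+m, m) binom(n+α, n-m) ((z-1)/2)^m`.
For `z = (u + u⁻¹)/2` one has `(z - 1)/2 = (u + u⁻¹ - 2)/4 = (u - 1)²/(4u)`, whose `m`-th power is,
by the binomial theorem, a Laurent polynomial in `u` symmetric under `u ↦ u⁻¹`. Collecting the
coefficient of `u^k` leaves a sum over `m = |k| + j`, and the duplication formula
`(2a)_{2j} = 4^j (a)_j (a+1/2)_j` turns it term by term into the `₃F₂` sum defining `d_{|k|,n}`.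
-/

lemma poch_zero (a : ℝ) : poch a 0 = 1 :=
  prod_range_zero _

lemma poch_succ (a : ℝ) (j : ℕ) : poch a (j + 1) = poch a j * (a + j) :=
  prod_range_succ _ j

lemma poch_eq_ascPochhammer_eval (a : ℝ) (j : ℕ) : poch a j = (ascPochhammer ℝ j).eval a := by
  induction j with
  | zero => simp [poch_zero]
  | succ j ih => rw [ascPochhammer_succ_eval, ← ih, poch_succ]

lemma poch_add (a : ℝ) (i j : ℕ) : poch a (i + j) = poch a i * poch (a + i) j := by
  simp only [poch, prod_range_add, Nat.cast_add, add_assoc]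

lemma poch_pos {a : ℝ} (ha : 0 < a) (j : ℕ) : 0 < poch a j :=
  prod_pos fun _ _ ↦ by positivity

lemma poch_add_natCast_ne_zero {a : ℝ} {n i j : ℕ} (ha : poch a n ≠ 0) (hij : i + j ≤ n) :
    poch (a + i) j ≠ 0 := by
  rw [← Nat.add_sub_cancel' hij, poch_add, poch_add] at ha
  exact right_ne_zero_of_mul (left_ne_zero_of_mul ha)

lemma poch_two_mul (a : ℝ) (j : ℕ) :
    poch (2 * a) (2 * j) = 4 ^ j * poch a j * poch (a + 1 / 2) j := by
  induction j with
  | zero => simp [poch_zero]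
  | succ j ih =>
    rw [mul_add_one, poch_succ, poch_succ, ih, poch_succ, poch_succ, pow_succ]
    push_cast
    ring

lemma factorial_add_eq_mul_poch (k j : ℕ) :
    ((k + j).factorial : ℝ) = k.factorial * poch (k + 1) j := by
  rw [poch_eq_ascPochhammer_eval, factorial_mul_ascPochhammer]

lemma poch_neg_natCast {p j : ℕ} (hj : j ≤ p) :
    poch (-p) j = (-1) ^ j * p.factorial / (p - j).factorial := by
  rw [poch_eq_ascPochhammer_eval, ascPochhammer_eval_neg_eq_descPochhammer,
    descPochhammer_eval_eq_descFactorial, ← Nat.factorial_mul_descFactorial hj]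
  push_cast
  field_simp

lemma gbinom_eq_poch_div (a : ℝ) (m : ℕ) : gbinom a m = poch (a - m + 1) m / m.factorial := by
  rw [gbinom, ← descPochhammer_eval_eq_prod_range, descPochhammer_eval_eq_ascPochhammer,
    poch_eq_ascPochhammer_eval]

lemma gbinom_eq_ringChoose (a : ℝ) (m : ℕ) : gbinom a m = Ring.choose a m := by
  rw [gbinom_eq_poch_div, Ring.choose_eq_smul, Polynomial.descPochhammer_smeval_eq_ascPochhammer,
    Polynomial.ascPochhammer_smeval_eq_eval, poch_eq_ascPochhammer_eval, smul_eq_mul,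
    div_eq_inv_mul]

lemma sum_gbinom_mul_gbinom (a b : ℝ) (m : ℕ) :
    ∑ k ∈ range (m + 1), gbinom a (m - k) * gbinom b k = gbinom (a + b) m := by
  simp only [gbinom_eq_ringChoose]
  rw [add_comm a b, Ring.add_choose_eq m (Commute.all b a),
    Nat.sum_antidiagonal_eq_sum_range_succ_mk]
  exact sum_congr rfl fun _ _ ↦ mul_comm _ _

lemma gbinom_mul_choose (a : ℝ) (i j : ℕ) :
    gbinom a (i + j) * (i + j).choose i = gbinom a j * gbinom (a - j) i := by
  have h := Ring.choose_add_smul_choose (a - j) i j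
  rw [sub_add_cancel, nsmul_eq_mul, ← Nat.choose_symm_add] at h
  simpa only [gbinom_eq_ringChoose, mul_comm] using h

/-- The coefficient of `((z - 1) / 2) ^ m` in the Jacobi polynomial `P_n^{(α,β)}(z)`, for
`m ≤ n`. -/
noncomputable def jacobiTaylorCoeff (α β : ℝ) (n m : ℕ) : ℝ :=
  gbinom (n + α) (n - m) * gbinom (n + α + β + m) m

lemma sum_gbinom_mul_gbinom_mul_choose (α β : ℝ) {n m : ℕ} (hm : m ≤ n) :
    ∑ k ∈ range (m + 1), gbinom (n + α) (n - k) * gbinom (n + β) k * (n - k).choose (m - k) =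
      jacobiTaylorCoeff α β n m := by
  rw [jacobiTaylorCoeff, show (n : ℝ) + α + β + m = m + α + (n + β) by ring,
    ← sum_gbinom_mul_gbinom (m + α), mul_sum]
  refine sum_congr rfl fun k hk ↦ ?_
  have hkm : k ≤ m := Nat.lt_succ_iff.mp (mem_range.mp hk)
  have trinomial := gbinom_mul_choose (n + α) (m - k) (n - m)
  rw [show m - k + (n - m) = n - k by omega, Nat.cast_sub hm,
    show (n : ℝ) + α - (n - m) = m + α by ring] at trinomial
  linear_combination gbinom (n + β) k * trinomial

lemma sum_mul_pow_mul_add_one_pow {R : Type*} [CommSemiring R] (a : ℕ → R) (n : ℕ) (w : R) :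
    ∑ k ∈ range (n + 1), a k * w ^ k * (w + 1) ^ (n - k) =
      ∑ m ∈ range (n + 1), (∑ k ∈ range (m + 1), a k * (n - k).choose (m - k)) * w ^ m := by
  calc
    _ = ∑ k ∈ range (n + 1), ∑ i ∈ range (n + 1 - k), a k * (n - k).choose i * w ^ (k + i) := by
      refine sum_congr rfl fun k hk ↦ ?_
      rw [Nat.succ_sub (Nat.lt_succ_iff.mp (mem_range.mp hk)), add_pow, mul_sum]
      refine sum_congr rfl fun i _ ↦ ?_
      rw [one_pow, pow_add]
      ring
    _ = ∑ m ∈ range (n + 1), ∑ k ∈ range (m + 1),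
          a k * (n - k).choose (m - k) * w ^ (k + (m - k)) :=
      (sum_range_diag_flip (n + 1) fun k i ↦ a k * (n - k).choose i * w ^ (k + i)).symm
    _ = _ := by
      refine sum_congr rfl fun m _ ↦ ?_
      rw [sum_mul]
      refine sum_congr rfl fun k hk ↦ ?_
      rw [Nat.add_sub_cancel' (Nat.lt_succ_iff.mp (mem_range.mp hk))]

lemma jacobiC_eq_sum_jacobiTaylorCoeff (α β : ℝ) (n : ℕ) (z : ℂ) :
    jacobiC α β n z =
      ∑ m ∈ range (n + 1), (jacobiTaylorCoeff α β n m : ℂ) * ((z - 1) / 2) ^ m := by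
  have rescale : jacobiC α β n z = ∑ k ∈ range (n + 1),
      ((gbinom (n + α) (n - k) * gbinom (n + β) k : ℝ) : ℂ) *
        ((z - 1) / 2) ^ k * ((z - 1) / 2 + 1) ^ (n - k) := by
    rw [jacobiC, mul_sum]
    refine sum_congr rfl fun k hk ↦ ?_
    have two_pow : (2 : ℂ) ^ n = 2 ^ k * 2 ^ (n - k) :=
      (pow_mul_pow_sub 2 (Nat.lt_succ_iff.mp (mem_range.mp hk))).symm
    rw [show (z - 1) / 2 + 1 = (z + 1) / 2 by ring, div_pow, div_pow, two_pow]
    field_simp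
  rw [rescale, sum_mul_pow_mul_add_one_pow]
  refine sum_congr rfl fun m hm ↦ ?_
  rw [← sum_gbinom_mul_gbinom_mul_choose α β (Nat.lt_succ_iff.mp (mem_range.mp hm))]
  push_cast
  rfl

lemma choose_two_mul_add_natAbs_sub {m i : ℕ} (hi : i ≤ 2 * m) :
    (2 * m).choose (m + (i - m : ℤ).natAbs) = (2 * m).choose i := by
  rcases le_total m i with hmi | him
  · rw [show m + (i - m : ℤ).natAbs = i by omega]
  · rw [show m + (i - m : ℤ).natAbs = 2 * m - i by omega, Nat.choose_symm hi]

lemma neg_one_pow_add_natAbs_sub {R : Type*} [Ring R] (m i : ℕ) :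
    (-1 : R) ^ (m + (i - m : ℤ).natAbs) = (-1) ^ i :=
  neg_one_pow_congr (by rw [Nat.even_iff, Nat.even_iff]; omega)

lemma add_inv_sub_two_pow {K : Type*} [Field K] {u : K} (hu : u ≠ 0) (m : ℕ) :
    (u + u⁻¹ - 2) ^ m = ∑ k ∈ Icc (-m : ℤ) m,
      (-1) ^ (m + k.natAbs) * ((2 * m).choose (m + k.natAbs) : K) * u ^ k := by
  calc
    (u + u⁻¹ - 2) ^ m = (-u + 1) ^ (2 * m) / u ^ m := by
      rw [pow_mul, ← div_pow]
      congr 1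
      field_simp
      ring
    _ = ∑ i ∈ range (2 * m + 1), (-1) ^ i * ((2 * m).choose i : K) * u ^ (i - m : ℤ) := by
      rw [add_pow, sum_div]
      refine sum_congr rfl fun i _ ↦ ?_
      rw [neg_pow, one_pow, zpow_sub₀ hu, zpow_natCast, zpow_natCast]
      ring
    _ = _ := by
      refine sum_bij' (fun i _ ↦ (i - m : ℤ)) (fun k _ ↦ (k + m).toNat)
        (fun i hi ↦ ?_) (fun k hk ↦ ?_) (fun i _ ↦ ?_) (fun k hk ↦ ?_) fun i hi ↦ ?_
      · rw [mem_range] at hi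
        rw [mem_Icc]
        omega
      · rw [mem_Icc] at hk
        rw [mem_range]
        omega
      · omega
      · rw [mem_Icc] at hk
        omega
      · rw [neg_one_pow_add_natAbs_sub,
          choose_two_mul_add_natAbs_sub (Nat.lt_succ_iff.mp (mem_range.mp hi))]

lemma jacobiTaylorCoeff_eq_poch_div (α β : ℝ) {n m : ℕ} (hm : m ≤ n) :
    jacobiTaylorCoeff α β n m =
      poch (n + α + β + 1) m * poch (m + α + 1) (n - m) / (m.factorial * (n - m).factorial) := by
  rw [jacobiTaylorCoeff, gbinom_eq_poch_div, gbinom_eq_poch_div, Nat.cast_sub hm,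
    show (n : ℝ) + α - (n - m) + 1 = m + α + 1 by ring,
    add_sub_cancel_right]
  field_simp

lemma choose_two_mul_add_eq_poch_div (k j : ℕ) :
    ((2 * (k + j)).choose (k + j + k) : ℝ) =
      4 ^ j * poch (k + 1 / 2) j * poch (k + 1) j / (poch (2 * k + 1) j * j.factorial) := by
  have duplication : poch (2 * k + 1) (2 * j) = 4 ^ j * poch (k + 1 / 2) j * poch (k + 1) j := by
    convert poch_two_mul (k + 1 / 2 : ℝ) j using 2 <;> ring_nf
  have factorials : ((2 * (k + j)).factorial : ℝ) =
      (2 * k).factorial * (4 ^ j * poch (k + 1 / 2) j * poch (k + 1) j) := by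
    rw [mul_add, factorial_add_eq_mul_poch, Nat.cast_mul, Nat.cast_ofNat, duplication]
  rw [Nat.cast_choose ℝ (by omega), show 2 * (k + j) - (k + j + k) = j by omega,
    show k + j + k = 2 * k + j by ring, factorial_add_eq_mul_poch, factorials, Nat.cast_mul,
    Nat.cast_ofNat]
  field_simp

lemma jacobiTaylorCoeff_mul_choose_eq {α : ℝ} (β : ℝ) {n k j : ℕ} (hα : poch (α + 1) n ≠ 0)
    (hkj : k + j ≤ n) :
    jacobiTaylorCoeff α β n (k + j) *
        ((-1) ^ (k + j + k) * ((2 * (k + j)).choose (k + j + k) : ℝ) / 4 ^ (k + j)) =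
      poch (n + α + β + 1) k * poch (k + α + 1) (n - k) /
          ((n - k).factorial * 2 ^ (2 * k) * k.factorial) *
        (poch (k - n) j * poch (n + k + α + β + 1) j * poch (k + 1 / 2) j /
          (poch (k + α + 1) j * poch (2 * k + 1) j * j.factorial)) := by
  have poch_ne_zero : poch (k + α + 1) j ≠ 0 := by
    rw [show k + α + 1 = α + 1 + k by ring]
    exact poch_add_natCast_ne_zero hα hkj
  have poch_k_succ_ne_zero : poch (k + 1) j ≠ 0 := (poch_pos (by positivity) j).ne'
  have poch_k_add_j : poch (n + α + β + 1) (k + j) =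
      poch (n + α + β + 1) k * poch (n + k + α + β + 1) j := by
    rw [poch_add, show (n : ℝ) + α + β + 1 + k = n + k + α + β + 1 by ring]
  have poch_n_sub_k : poch (k + α + 1) (n - k) =
      poch (k + α + 1) j * poch ((k + j : ℕ) + α + 1) (n - (k + j)) := by
    rw [show n - k = j + (n - (k + j)) by omega, poch_add]
    push_cast
    rw [show (k : ℝ) + α + 1 + j = k + j + α + 1 by ring]
  have poch_k_sub_n : poch (k - n) j =
      (-1) ^ j * (n - k).factorial / (n - (k + j)).factorial := by
    rw [← neg_sub, ← Nat.cast_sub (by omega), poch_neg_natCast (by omega), Nat.sub_sub]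
  have sign : (-1 : ℝ) ^ (k + j + k) = (-1) ^ j :=
    neg_one_pow_congr (by rw [Nat.even_iff, Nat.even_iff]; omega)
  have two_pow : (2 : ℝ) ^ (2 * k) = 4 ^ k := by
    rw [pow_mul]
    norm_num
  rw [jacobiTaylorCoeff_eq_poch_div α β hkj, choose_two_mul_add_eq_poch_div, poch_k_add_j,
    poch_n_sub_k, poch_k_sub_n, factorial_add_eq_mul_poch, sign, two_pow, pow_add]
  field_simp

lemma dCoeff_eq_sum_jacobiTaylorCoeff {α : ℝ} (β : ℝ) {n k : ℕ} (hα : poch (α + 1) n ≠ 0)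
    (hk : k ≤ n) :
    dCoeff α β n k = ∑ m ∈ Ico k (n + 1), jacobiTaylorCoeff α β n m *
      ((-1) ^ (m + k) * ((2 * m).choose (m + k) : ℝ) / 4 ^ m) := by
  rw [dCoeff, mul_sum, sum_Ico_eq_sum_range, Nat.succ_sub hk]
  refine sum_congr rfl fun j hj ↦ (jacobiTaylorCoeff_mul_choose_eq β hα ?_).symm
  have := mem_range.mp hj
  omega

theorem jacobi_explicit_on_bernstein_ellipse_general {α : ℝ} (β : ℝ) {n : ℕ}
    (hα : poch (α + 1) n ≠ 0) {u : ℂ} (hu : u ≠ 0) :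
    jacobiC α β n ((u + u⁻¹) / 2) =
      ∑ k ∈ Icc (-n : ℤ) n, (dCoeff α β n k.natAbs : ℂ) * u ^ k := by
  calc
    _ = ∑ m ∈ range (n + 1), ∑ k ∈ Icc (-m : ℤ) m, (jacobiTaylorCoeff α β n m : ℂ) *
          ((-1) ^ (m + k.natAbs) * ((2 * m).choose (m + k.natAbs) : ℂ) / 4 ^ m) * u ^ k := by
      rw [jacobiC_eq_sum_jacobiTaylorCoeff,
        show ((u + u⁻¹) / 2 - 1) / 2 = (u + u⁻¹ - 2) / 4 by ring]
      refine sum_congr rfl fun m _ ↦ ?_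
      rw [div_pow, add_inv_sub_two_pow hu, sum_div, mul_sum]
      exact sum_congr rfl fun k _ ↦ by ring
    _ = ∑ k ∈ Icc (-n : ℤ) n, ∑ m ∈ Ico k.natAbs (n + 1), (jacobiTaylorCoeff α β n m : ℂ) *
          ((-1) ^ (m + k.natAbs) * ((2 * m).choose (m + k.natAbs) : ℂ) / 4 ^ m) * u ^ k :=
      sum_comm' fun m k ↦ by simp only [mem_range, mem_Icc, mem_Ico]; omega
    _ = _ := by
      refine sum_congr rfl fun k hk ↦ ?_
      have hkn : k.natAbs ≤ n := by rw [mem_Icc] at hk; omega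
      rw [dCoeff_eq_sum_jacobiTaylorCoeff β hα hkn, ← sum_mul]
      push_cast
      rfl

/-- For `α, β > -1`, `ρ ≥ 1` and `|u| = ρ`, with `z = (u + u⁻¹)/2 ∈ E_ρ`,
`P_n^{(α,β)}(z) = ∑_{k=-n}^{n} d_{|k|,n} u^k`. -/
theorem jacobi_explicit_on_bernstein_ellipse
    (α β : ℝ) (hα : -1 < α) (hβ : -1 < β) (n : ℕ)
    (ρ : ℝ) (hρ : 1 ≤ ρ) (u : ℂ) (hu : ‖u‖ = ρ) :
    jacobiC α β n ((u + u⁻¹) / 2) =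
      ∑ k ∈ Finset.Icc (-(n : ℤ)) (n : ℤ), ((dCoeff α β n k.natAbs : ℝ) : ℂ) * u ^ k := by
  have hu0 : u ≠ 0 := norm_pos_iff.mp (by linarith)
  exact jacobi_explicit_on_bernstein_ellipse_general β (poch_pos (by linarith) n).ne' hu0
end

section
/- Let α, β > −1 with α < β and α + β ≥ −1, let ρ ≥ 1 and let n ≥ 1 be an integer. Then for every z on the Bernstein ellipse E_ρ, |P_n^{(α,β)}(z)| ≤ |P_n^{(α,β)}(−(ρ + ρ⁻¹)/2)|, and equality holds if and only if z = −(ρ + ρ⁻¹)/2, i.e. the maximum of |P_n^{(α,β)}| over E_ρ is attained uniquely at the left endpoint of the major axis. -/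
open Finset

/-!
The reflection `P_n^{(α,β)}(-z) = (-1)ⁿ P_n^{(β,α)}(z)` exchanges the two endpoints, so consider
`β < α` and the right endpoint `r = (ρ + ρ⁻¹)/2`. Expand `P_n^{(α,β)} = ∑ aₖ Tₖ` in Chebyshev
polynomials. Applying the Jacobi differential operator and reading off coefficients in the
Chebyshev polynomials of the second kind gives a three-term recurrence expressing `aⱼ` through
`aⱼ₊₁` and `aⱼ₊₂`, whose coefficients are nonnegative because `β < α` and `α + β ≥ -1`.
Hence all `aₖ` have the sign of `aₙ`, which is positive since `P_n^{(α,β)}(1) > 0`.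

With `z = (u + u⁻¹)/2` one has `Tₖ(z) = (uᵏ + u⁻ᵏ)/2`, so `|Tₖ(z)| ≤ Tₖ(r)` on the ellipse and the
triangle inequality gives the bound. Equality forces `|a₀ + a₁ z| = a₀ + a₁ r`, hence `z = r`.
-/

open Polynomial
open Polynomial.Chebyshev hiding C C_mul aeval_C

section JacobiOperator

variable {R : Type*} [CommRing R] (α β ν : R)

/-- The left-hand side `(1 - x²) y'' + (β - α - (α + β + 2) x) y' + ν (ν + α + β + 1) y` of the
Jacobi differential equation; for `ν = n` its polynomial solutions include `P_n^{(α,β)}`. -/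
noncomputable def jacobiOp : R[X] →ₗ[R] R[X] :=
  LinearMap.mulLeft R (1 - X ^ 2) ∘ₗ derivative ∘ₗ derivative
    + LinearMap.mulLeft R (C (β - α) - C (α + β + 2) * X) ∘ₗ derivative
    + LinearMap.mulLeft R (C (ν * (ν + α + β + 1)))

theorem jacobiOp_apply (y : R[X]) :
    jacobiOp α β ν y = (1 - X ^ 2) * derivative (derivative y)
      + (C (β - α) - C (α + β + 2) * X) * derivative y + C (ν * (ν + α + β + 1)) * y :=
  rfl

theorem jacobiOp_X_sub_one_pow_mul_X_add_one_pow (k r : ℕ) :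
    jacobiOp α β ((k + r : ℕ) : R) ((X - 1) ^ k * (X + 1) ^ r) =
      C (2 * r * (r + β)) * ((X - 1) ^ k * (X + 1) ^ (r - 1))
        - C (2 * k * (k + α)) * ((X - 1) ^ (k - 1) * (X + 1) ^ r) := by
  rw [jacobiOp_apply]
  rcases k with _ | _ | k <;> rcases r with _ | _ | r <;>
  · simp only [derivative_mul, derivative_pow, derivative_add, derivative_sub, derivative_X,
      derivative_one, derivative_zero, derivative_natCast, Nat.cast_add, Nat.cast_zero,
      Nat.cast_one, add_tsub_cancel_right, zero_tsub, C_mul, C_add, C_sub, C_0, C_1, C_ofNat,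
      map_natCast, pow_zero]
    ring

theorem two_mul_jacobiOp_T (k : ℤ) :
    2 * jacobiOp α β ν (T R k) =
      C ((ν - k) * (ν + k + α + β + 1)) * U R k
        - C (2 * (α - β) * k) * U R (k - 1)
        - C ((ν + k) * (ν - k + α + β + 1)) * U R (k - 2) := by
  have hT'' := one_sub_X_sq_mul_derivative_derivative_T_eq_poly_in_T (R := R) k
  simp only [Function.iterate_succ, Function.iterate_zero, Function.comp, id] at hT''
  rw [jacobiOp_apply, hT'', T_derivative_eq_U, T_eq_U_sub_X_mul_U, U_eq R k]
  simp only [C_mul, C_add, C_sub, C_ofNat, C_1, map_intCast]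
  ring

/- The weight `2` at `j = 0` comes from `U₋₂ = -U₀`: the constant term contributes twice. -/
theorem two_mul_jacobiOp_sum_T (a : ℕ → R) (m : ℕ) :
    2 * jacobiOp α β ν (∑ k ∈ range (m + 1), a k • T R k) =
      ∑ j ∈ range m, C ((if j = 0 then 2 else 1) * ((ν - j) * (ν + j + α + β + 1)) * a j
          - 2 * (α - β) * (j + 1) * a (j + 1)
          - (ν + (j + 2)) * (ν - (j + 2) + α + β + 1) * a (j + 2)) * U R j
        + C ((if m = 0 then 2 else 1) * ((ν - m) * (ν + m + α + β + 1)) * a m) * U R m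
        + C ((ν + (m + 1)) * (ν - (m + 1) + α + β + 1) * a (m + 1)) * U R (m - 1) := by
  induction m with
  | zero =>
    simp only [zero_add, range_one, sum_singleton, range_zero, sum_empty, smul_eq_C_mul,
      Nat.cast_zero, T_zero, U_zero, zero_sub, U_neg_one, jacobiOp_apply, mul_one,
      derivative_C, derivative_zero, if_true, C_mul, C_add, C_sub, C_ofNat, C_0, C_1]
    ring
  | succ m ih =>
    have hcast : ((m + 1 : ℕ) : ℤ) - 2 = m - 1 := by push_cast; ring
    rw [sum_range_succ, map_add, mul_add, ih, map_smul, mul_smul_comm, two_mul_jacobiOp_T,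
      smul_eq_C_mul, sum_range_succ _ m, hcast]
    simp only [Nat.add_eq_zero_iff, one_ne_zero, and_false, if_false, Nat.cast_add, Nat.cast_one,
      Int.cast_add, Int.cast_natCast, Int.cast_one, add_sub_cancel_right, add_assoc,
      one_add_one_eq_two]
    simp only [C_mul, C_add, C_sub, C_ofNat, C_1]
    ring

end JacobiOperator

section ChebyshevExpansion

variable {F : Type*} [Field F] [NeZero (2 : F)]

theorem exists_eq_sum_T {n : ℕ} {y : F[X]} (hy : y.natDegree ≤ n) :
    ∃ a : ℕ → F, (∀ k, n < k → a k = 0) ∧ y = ∑ k ∈ range (n + 1), a k • T F k := by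
  let chebyshevT : Sequence F := ⟨fun k => T F k, fun k => by simp⟩
  have hspan : y ∈ Submodule.span F (chebyshevT '' Set.Iic n) := by
    rw [chebyshevT.span_degreeLE fun k _ => by simp, mem_degreeLE]
    exact natDegree_le_iff_degree_le.mp hy
  obtain ⟨a, ha, rfl⟩ := (Finsupp.mem_span_image_iff_linearCombination F).mp hspan
  rw [Finsupp.mem_supported] at ha
  refine ⟨a, fun k hk => ?_, ?_⟩
  · by_contra hak
    exact hk.not_ge (ha (Finsupp.mem_support_iff.mpr hak))
  · refine Finsupp.sum_of_support_subset a (fun k hk => ?_) _ (by simp)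
    exact mem_range_succ_iff.mpr (ha hk)

theorem linearIndependent_U : LinearIndependent F fun k : ℕ => U F k :=
  (⟨fun k => U F k, fun k => degree_U_natCast F k⟩ : Sequence F).linearIndependent

theorem coeff_recurrence_of_jacobiOp_sum_T_eq_zero {α β : F} {n : ℕ} {a : ℕ → F}
    (ha : a (n + 1) = 0) (h : jacobiOp α β n (∑ k ∈ range (n + 1), a k • T F k) = 0)
    {j : ℕ} (hj : j < n) :
    (if j = 0 then 2 else 1) * ((n - j : F) * (n + j + α + β + 1)) * a j =
      2 * (α - β) * (j + 1) * a (j + 1)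
        + (n + (j + 2)) * (n - (j + 2) + α + β + 1) * a (j + 2) := by
  have hsum := two_mul_jacobiOp_sum_T α β n a n
  simp only [h, ha, sub_self, zero_mul, mul_zero, C_0, add_zero, ← smul_eq_C_mul] at hsum
  have hcoeff := linearIndependent_iff'.mp linearIndependent_U _ _ hsum.symm j (mem_range.mpr hj)
  linear_combination hcoeff

end ChebyshevExpansion

theorem exists_pos_eq_mul_of_backward_recurrence {F : Type*} [Field F] [LinearOrder F]
    [IsStrictOrderedRing F] {n : ℕ} {a p q r : ℕ → F} (ha : a (n + 1) = 0)
    (hp : ∀ j < n, 0 < p j) (hq : ∀ j < n, 0 < q j) (hr : ∀ j, j + 2 ≤ n → 0 ≤ r j)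
    (hrec : ∀ j < n, p j * a j = q j * a (j + 1) + r j * a (j + 2)) {k : ℕ} (hk : k ≤ n) :
    ∃ d, 0 < d ∧ a k = d * a n := by
  suffices (∃ d, 0 < d ∧ a k = d * a n) ∧ ∃ e, 0 ≤ e ∧ a (k + 1) = e * a n from this.1
  induction hk using Nat.decreasingInduction with
  | self => exact ⟨⟨1, one_pos, (one_mul _).symm⟩, 0, le_rfl, by rw [ha, zero_mul]⟩
  | of_succ k hk ih =>
    obtain ⟨⟨d, hd, hkd⟩, e, he, hke⟩ := ih
    obtain ⟨e', he', hke'⟩ : ∃ e', 0 ≤ e' ∧ r k * a (k + 2) = e' * a n := by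
      rcases (Nat.succ_le_of_lt hk).eq_or_lt with rfl | hk'
      · exact ⟨0, le_rfl, by rw [ha, mul_zero, zero_mul]⟩
      · exact ⟨r k * e, mul_nonneg (hr k hk') he, by rw [hke, mul_assoc]⟩
    have hpk := hp k hk
    refine ⟨⟨(q k * d + e') / p k, ?_, ?_⟩, d, hd.le, hkd⟩
    · exact div_pos (add_pos_of_pos_of_nonneg (mul_pos (hq k hk) hd) he') hpk
    · rw [div_mul_eq_mul_div, eq_div_iff hpk.ne', mul_comm, hrec k hk, hkd, hke']
      ring

section JacobiPolynomial

variable (α β : ℝ) (n : ℕ)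

/-- `P_n^{(α,β)}` as an element of `ℝ[X]`, so that `jacobiP` and `jacobiC` are its values at real
and complex points. -/
noncomputable def jacobiPoly : ℝ[X] :=
  C (1 / 2 ^ n) * ∑ k ∈ range (n + 1),
    C (gbinom (n + α) (n - k) * gbinom (n + β) k) * ((X - 1) ^ k * (X + 1) ^ (n - k))

theorem eval_jacobiPoly (x : ℝ) : (jacobiPoly α β n).eval x = jacobiP α β n x := by
  simp [jacobiPoly, jacobiP, eval_finsetSum, mul_assoc]

theorem aeval_jacobiPoly (z : ℂ) : aeval z (jacobiPoly α β n) = jacobiC α β n z := by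
  simp [jacobiPoly, jacobiC, mul_assoc]

theorem jacobiPoly_comp_neg_X :
    (jacobiPoly α β n).comp (-X) = (-1) ^ n * jacobiPoly β α n := by
  have hterm (k : ℕ) (hk : k ∈ range (n + 1)) :
      ((X - 1) ^ k * (X + 1) ^ (n - k) : ℝ[X]).comp (-X) =
        (-1) ^ n * ((X - 1) ^ (n - k) * (X + 1) ^ k) := by
    have hX : (-X - 1 : ℝ[X]) = -1 * (X + 1) := by ring
    have hX' : (-X + 1 : ℝ[X]) = -1 * (X - 1) := by ring
    have hpow : (-1 : ℝ[X]) ^ n = (-1) ^ k * (-1) ^ (n - k) := by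
      rw [← pow_add, Nat.add_sub_cancel' (mem_range_succ_iff.mp hk)]
    simp only [mul_comp, pow_comp, sub_comp, add_comp, X_comp, one_comp, hX, hX', mul_pow, hpow]
    ring
  rw [jacobiPoly, jacobiPoly, mul_comp, Polynomial.sum_comp, C_comp, mul_sum, mul_sum, mul_sum,
    ← sum_range_reflect]
  refine sum_congr rfl fun k hk => ?_
  have hkn := mem_range_succ_iff.mp hk
  rw [Nat.add_sub_cancel, mul_comp, C_comp, hterm _ (mem_range_succ_iff.mpr (n.sub_le k)),
    Nat.sub_sub_self hkn, mul_comm (gbinom (n + α) k)]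
  ring

theorem jacobiC_neg (z : ℂ) : jacobiC α β n (-z) = (-1) ^ n * jacobiC β α n z := by
  simpa [aeval_comp, aeval_jacobiPoly] using congrArg (aeval z) (jacobiPoly_comp_neg_X α β n)

theorem jacobiP_neg (x : ℝ) : jacobiP α β n (-x) = (-1) ^ n * jacobiP β α n x := by
  simpa [eval_comp, eval_jacobiPoly] using congrArg (eval x) (jacobiPoly_comp_neg_X α β n)

theorem natDegree_jacobiPoly_le : (jacobiPoly α β n).natDegree ≤ n := by
  refine (natDegree_C_mul_le _ _).trans (natDegree_sum_le_of_forall_le _ _ fun k hk => ?_)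
  have hkn := mem_range_succ_iff.mp hk
  have hdeg : ((X - 1) ^ k * (X + 1) ^ (n - k) : ℝ[X]).natDegree ≤ k + (n - k) := by
    compute_degree
  exact (natDegree_C_mul_le _ _).trans (hdeg.trans_eq (Nat.add_sub_cancel' hkn))

theorem gbinom_succ_mul (a : ℝ) (m : ℕ) :
    gbinom a (m + 1) * (m + 1) = gbinom a m * (a - m) := by
  unfold gbinom
  rw [prod_range_succ, Nat.factorial_succ]
  push_cast
  field_simp

theorem gbinom_pos {a : ℝ} {m : ℕ} (h : (m : ℝ) - 1 < a) : 0 < gbinom a m := by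
  refine div_pos (prod_pos fun i hi => ?_) (by positivity)
  have him : (i : ℝ) + 1 ≤ m := by exact_mod_cast mem_range.mp hi
  linarith

theorem jacobiP_one : jacobiP α β n 1 = gbinom (n + α) n := by
  have hzero : gbinom (n + β) 0 = 1 := by simp [gbinom]
  rw [jacobiP, sum_eq_single 0 (fun k _ hk => by simp [hk]) (by simp), hzero, Nat.sub_zero,
    pow_zero, one_add_one_eq_two]
  field_simp

variable {n} in
theorem gbinom_mul_gbinom_succ {k : ℕ} (hk : k < n) :
    (k + 1) * (k + 1 + α) * (gbinom (n + α) (n - (k + 1)) * gbinom (n + β) (k + 1)) =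
      (n - k : ℕ) * ((n - k : ℕ) + β) * (gbinom (n + α) (n - k) * gbinom (n + β) k) := by
  obtain ⟨r, rfl⟩ := Nat.exists_eq_add_of_lt hk
  have hr := gbinom_succ_mul ((k + r + 1 : ℕ) + α) r
  have hk := gbinom_succ_mul ((k + r + 1 : ℕ) + β) k
  rw [show k + r + 1 - (k + 1) = r by omega, show k + r + 1 - k = r + 1 by omega]
  push_cast at hr hk ⊢
  linear_combination (k + 1 + α) * gbinom (k + r + 1 + α) r * hk
    - (r + 1 + β) * gbinom (k + r + 1 + β) k * hr

theorem jacobiOp_jacobiPoly : jacobiOp α β n (jacobiPoly α β n) = 0 := by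
  have hterm (k : ℕ) (hk : k ∈ range (n + 1)) :
      jacobiOp α β n ((X - 1) ^ k * (X + 1) ^ (n - k)) =
        C (2 * ((n - k : ℕ) : ℝ) * ((n - k : ℕ) + β)) * ((X - 1) ^ k * (X + 1) ^ (n - k - 1))
          - C (2 * (k : ℝ) * (k + α)) * ((X - 1) ^ (k - 1) * (X + 1) ^ (n - k)) := by
    rw [← jacobiOp_X_sub_one_pow_mul_X_add_one_pow,
      Nat.add_sub_cancel' (mem_range_succ_iff.mp hk)]
  simp only [jacobiPoly, ← smul_eq_C_mul, map_smul, map_sum]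
  rw [sum_congr rfl fun k hk => by rw [hterm k hk, smul_sub], sum_sub_distrib, sum_range_succ,
    sum_range_succ']
  simp only [Nat.sub_self, Nat.cast_zero, mul_zero, zero_mul, C_0, smul_zero, add_zero]
  rw [sub_eq_zero.mpr, smul_zero]
  refine sum_congr rfl fun k hk => ?_
  have hcoeff := congrArg C (gbinom_mul_gbinom_succ α β (mem_range.mp hk))
  rw [smul_eq_C_mul, smul_eq_C_mul, Nat.add_sub_cancel, Nat.sub_sub]
  push_cast at hcoeff ⊢
  simp only [C_mul, C_add, C_1, C_ofNat] at hcoeff ⊢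
  linear_combination -2 * ((X - 1) ^ k * (X + 1) ^ (n - (k + 1))) * hcoeff

end JacobiPolynomial

theorem exists_pos_jacobiPoly_eq_sum_T {α β : ℝ} (hβα : β < α) (hsum : -1 ≤ α + β) (n : ℕ) :
    ∃ a : ℕ → ℝ, (∀ k ≤ n, 0 < a k) ∧ jacobiPoly α β n = ∑ k ∈ range (n + 1), a k • T ℝ k := by
  obtain ⟨a, ha, hexp⟩ := exists_eq_sum_T (natDegree_jacobiPoly_le α β n)
  have hrec {j : ℕ} (hj : j < n) := coeff_recurrence_of_jacobiOp_sum_T_eq_zero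
    (ha _ n.lt_succ_self) (hexp ▸ jacobiOp_jacobiPoly α β n) hj
  have hratio {k : ℕ} (hk : k ≤ n) : ∃ d, 0 < d ∧ a k = d * a n := by
    refine exists_pos_eq_mul_of_backward_recurrence (ha _ n.lt_succ_self)
      (fun j hj => ?_) (fun j _ => ?_) (fun j hj => ?_) (fun j hj => hrec hj) hk
    · have hjn : (j : ℝ) < n := by exact_mod_cast hj
      have hfactor : (0 : ℝ) < n + j + α + β + 1 := by linarith [j.cast_nonneg (α := ℝ)]
      have := mul_pos (sub_pos.mpr hjn) hfactor
      split_ifs <;> linarith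
    · have := sub_pos.mpr hβα
      positivity
    · have hjn : (j : ℝ) + 2 ≤ n := by exact_mod_cast hj
      exact mul_nonneg (by positivity) (by linarith)
  have hone : 0 < ∑ k ∈ range (n + 1), a k := by
    have hα : (n : ℝ) - 1 < n + α := by linarith
    have heval := congrArg (eval 1) hexp
    simp only [eval_jacobiPoly, jacobiP_one, eval_finsetSum, eval_smul, T_eval_one, smul_eq_mul,
      mul_one] at heval
    exact heval ▸ gbinom_pos hα
  have hlead : 0 < a n := by
    by_contra! hle
    refine hone.not_ge (sum_nonpos fun k hk => ?_)
    obtain ⟨d, hd, hk⟩ := hratio (mem_range_succ_iff.mp hk)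
    exact hk ▸ mul_nonpos_of_nonneg_of_nonpos hd.le hle
  refine ⟨a, fun k hk => ?_, hexp⟩
  obtain ⟨d, hd, hk⟩ := hratio hk
  exact hk ▸ mul_pos hd hlead

section BernsteinEllipse

theorem eval_T_half_add_inv {F : Type*} [Field F] [NeZero (2 : F)] {u : F} (hu : u ≠ 0) (k : ℕ) :
    (T F k).eval ((u + u⁻¹) / 2) = (u ^ k + u⁻¹ ^ k) / 2 := by
  induction k using Nat.twoStepInduction with
  | zero => simp
  | one => simp
  | more k ih ih' =>
    push_cast at ih' ⊢
    rw [T_add_two, eval_sub, eval_mul, ih, ih', eval_mul, eval_X, eval_ofNat]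
    simp only [inv_pow]
    field_simp
    ring

variable {ρ : ℝ} {z : ℂ}

theorem neg_mem_bernsteinEllipse (hz : z ∈ bernsteinEllipse ρ) : -z ∈ bernsteinEllipse ρ := by
  obtain ⟨u, hu, rfl⟩ := hz
  exact ⟨-u, by rwa [norm_neg], by rw [inv_neg]; ring⟩

theorem norm_eval_T_le_of_mem_bernsteinEllipse (hρ : 0 < ρ) (hz : z ∈ bernsteinEllipse ρ) (k : ℕ) :
    ‖(T ℂ k).eval z‖ ≤ (T ℝ k).eval ((ρ + ρ⁻¹) / 2) := by
  obtain ⟨u, rfl, rfl⟩ := hz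
  rw [eval_T_half_add_inv (norm_pos_iff.mp hρ), eval_T_half_add_inv hρ.ne', norm_div,
    Complex.norm_ofNat]
  gcongr
  exact (norm_add_le _ _).trans_eq (by simp)

theorem norm_aeval_sum_T_le_of_mem_bernsteinEllipse (hρ : 0 < ρ) (hz : z ∈ bernsteinEllipse ρ)
    {s : Finset ℕ} {a : ℕ → ℝ} (ha : ∀ k ∈ s, 0 ≤ a k) :
    ‖aeval z (∑ k ∈ s, a k • T ℝ k)‖ ≤ (∑ k ∈ s, a k • T ℝ k).eval ((ρ + ρ⁻¹) / 2) := by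
  rw [map_sum, eval_finsetSum]
  refine norm_sum_le_of_le s fun k hk => ?_
  rw [map_smul, norm_smul, aeval_T, eval_smul, smul_eq_mul, Real.norm_of_nonneg (ha k hk)]
  exact mul_le_mul_of_nonneg_left (norm_eval_T_le_of_mem_bernsteinEllipse hρ hz k) (ha k hk)

theorem eq_ofReal_of_add_mul_le_norm {x y r : ℝ} {ζ : ℂ} (hx : 0 < x) (hy : 0 < y)
    (hζ : ‖ζ‖ ≤ r) (h : x + y * r ≤ ‖(x + y * ζ : ℂ)‖) : ζ = r := by
  have hyζ : ‖(y * ζ : ℂ)‖ = y * ‖ζ‖ := by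
    rw [norm_mul, Complex.norm_real, Real.norm_of_nonneg hy.le]
  have hnx : ‖(x : ℂ)‖ = x := by rw [Complex.norm_real, Real.norm_of_nonneg hx.le]
  have htri := norm_add_le (x : ℂ) (y * ζ)
  have hr : ‖ζ‖ = r := hζ.antisymm (le_of_mul_le_mul_left (by linarith) hy)
  have hray : SameRay ℝ (x : ℂ) (y * ζ) :=
    sameRay_iff_norm_add.mpr (htri.antisymm (by rw [hyζ, hnx, hr]; exact h))
  have hsmul := hray.norm_smul_eq
  rw [hyζ, hnx, hr, Complex.real_smul, Complex.real_smul] at hsmul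
  have hxy : (x * y : ℂ) ≠ 0 := by exact_mod_cast (mul_pos hx hy).ne'
  refine mul_left_cancel₀ hxy ?_
  push_cast at hsmul
  linear_combination hsmul

theorem norm_aeval_sum_T_eq_iff_of_mem_bernsteinEllipse (hρ : 0 < ρ)
    (hz : z ∈ bernsteinEllipse ρ) {n : ℕ} (hn : 1 ≤ n) {a : ℕ → ℝ} (ha : ∀ k ≤ n, 0 ≤ a k)
    (ha₀ : 0 < a 0) (ha₁ : 0 < a 1) :
    ‖aeval z (∑ k ∈ range (n + 1), a k • T ℝ k)‖ =
        (∑ k ∈ range (n + 1), a k • T ℝ k).eval ((ρ + ρ⁻¹) / 2) ↔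
      z = ((ρ + ρ⁻¹) / 2 : ℝ) := by
  have hnonneg (k) (hk : k ∈ range (n + 1)) : 0 ≤ a k := ha k (mem_range_succ_iff.mp hk)
  set r := (ρ + ρ⁻¹) / 2
  constructor
  · intro h
    have hsplit : ∑ k ∈ range (n + 1), a k • T ℝ k =
        (C (a 0) + C (a 1) * X) + ∑ k ∈ Ico 2 (n + 1), a k • T ℝ k := by
      rw [← sum_range_add_sum_Ico _ (show 2 ≤ n + 1 by omega)]
      simp [sum_range_succ, smul_eq_C_mul]
    have htail : ‖aeval z (∑ k ∈ Ico 2 (n + 1), a k • T ℝ k)‖ ≤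
        (∑ k ∈ Ico 2 (n + 1), a k • T ℝ k).eval r :=
      norm_aeval_sum_T_le_of_mem_bernsteinEllipse hρ hz fun k hk =>
        hnonneg k (by rw [mem_Ico] at hk; exact mem_range.mpr hk.2)
    have hzr : ‖z‖ ≤ r := by simpa using norm_eval_T_le_of_mem_bernsteinEllipse hρ hz 1
    refine eq_ofReal_of_add_mul_le_norm ha₀ ha₁ hzr ?_
    have htri := norm_add_le ((a 0 : ℂ) + a 1 * z) (aeval z (∑ k ∈ Ico 2 (n + 1), a k • T ℝ k))
    rw [hsplit] at h
    simp only [map_add, map_mul, aeval_C, aeval_X, eval_add, eval_mul, eval_C, eval_X,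
      Complex.coe_algebraMap] at h
    linarith
  · rintro rfl
    have hle := norm_aeval_sum_T_le_of_mem_bernsteinEllipse hρ hz hnonneg
    rw [← Complex.coe_algebraMap, aeval_algebraMap_apply, Complex.coe_algebraMap,
      Complex.norm_real, coe_aeval_eq_eval, Real.norm_of_nonneg ((norm_nonneg _).trans hle)]

end BernsteinEllipse

theorem jacobi_max_at_left_endpoint_general
    (α β : ℝ) (hab : α < β) (hsum : -1 ≤ α + β) (ρ : ℝ) (hρ : 0 < ρ) (n : ℕ) (hn : 1 ≤ n) :
    ∀ z ∈ bernsteinEllipse ρ,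
      ‖jacobiC α β n z‖ ≤ |jacobiP α β n (-((ρ + ρ⁻¹) / 2))| ∧
      (‖jacobiC α β n z‖ = |jacobiP α β n (-((ρ + ρ⁻¹) / 2))| ↔
        z = -(((ρ + ρ⁻¹) / 2 : ℝ) : ℂ)) := by
  intro z hz
  obtain ⟨a, ha, hexp⟩ := exists_pos_jacobiPoly_eq_sum_T hab (add_comm α β ▸ hsum) n
  have hneg := neg_mem_bernsteinEllipse hz
  have hle := norm_aeval_sum_T_le_of_mem_bernsteinEllipse hρ hneg
    fun k hk => (ha k (mem_range_succ_iff.mp hk)).le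
  have heq := norm_aeval_sum_T_eq_iff_of_mem_bernsteinEllipse hρ hneg hn
    (fun k hk => (ha k hk).le) (ha 0 n.zero_le) (ha 1 hn)
  rw [← hexp, aeval_jacobiPoly, eval_jacobiPoly] at hle heq
  have hC : ‖jacobiC α β n z‖ = ‖jacobiC β α n (-z)‖ := by
    rw [← neg_neg z, jacobiC_neg, neg_neg]
    simp
  have hP : |jacobiP α β n (-((ρ + ρ⁻¹) / 2))| = jacobiP β α n ((ρ + ρ⁻¹) / 2) := by
    rw [jacobiP_neg, abs_mul, abs_neg_one_pow, one_mul, abs_of_nonneg ((norm_nonneg _).trans hle)]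
  rw [hC, hP, ← neg_eq_iff_eq_neg]
  exact ⟨hle, heq⟩

/-- if `α < β` and `α + β ≥ -1`, then the maximum of `|P_n^{(α,β)}|` over the
Bernstein ellipse `E_ρ` is attained uniquely at the left endpoint `-(ρ + ρ⁻¹)/2` of the
major axis. -/
theorem jacobi_max_at_left_endpoint
    (α β : ℝ) (hα : -1 < α) (hβ : -1 < β) (hab : α < β) (hsum : -1 ≤ α + β)
    (ρ : ℝ) (hρ : 1 ≤ ρ) (n : ℕ) (hn : 1 ≤ n) :
    ∀ z ∈ bernsteinEllipse ρ,
      ‖jacobiC α β n z‖ ≤ |jacobiP α β n (-((ρ + ρ⁻¹) / 2))| ∧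
      (‖jacobiC α β n z‖ = |jacobiP α β n (-((ρ + ρ⁻¹) / 2))| ↔
        z = -(((ρ + ρ⁻¹) / 2 : ℝ) : ℂ)) := by
  exact jacobi_max_at_left_endpoint_general α β hab hsum ρ (zero_lt_one.trans_le hρ) n hn
end
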